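/- Let N ≥ 2 be an integer and p, q real numbers with p > 1 and q > p − 1. There exists a constant c = c(N,p,q) > 0 such that for every nonempty proper open subset Ω of ℝ^N and every strong solution u of (E) on Ω, one has |∇u(x)| ≤ c · dist(x, Ωᶜ)^{−1/(q+1−p)} for every x ∈ Ω. -/

import Mathlib

open Metric Set Filter Topology MeasureTheory

/-- The vector field `x ↦ |∇u(x)|^{p-2} ∇u(x)`. -/
noncomputable def pGradField {N : ℕ} (p : ℝ) (u : EuclideanSpace ℝ (Fin N) → ℝ)
    (x : EuclideanSpace ℝ (Fin N)) : EuclideanSpace ℝ (Fin N) :=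
  ‖gradient u x‖ ^ (p - 2) • gradient u x

/-- A strong solution of `(E) : -Δ_p u + |∇u|^q = 0` on an open set `G ⊆ ℝ^N`. -/
def IsStrongSolution {N : ℕ} (p q : ℝ) (G : Set (EuclideanSpace ℝ (Fin N)))
    (u : EuclideanSpace ℝ (Fin N) → ℝ) : Prop :=
  ContDiffOn ℝ 1 u G ∧
  ContDiffOn ℝ 3 u {x | x ∈ G ∧ gradient u x ≠ 0} ∧
  ∀ x ∈ G, DifferentiableAt ℝ (pGradField p u) x ∧
    LinearMap.trace ℝ (EuclideanSpace ℝ (Fin N))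
      (fderiv ℝ (pGradField p u) x : EuclideanSpace ℝ (Fin N) →ₗ[ℝ] EuclideanSpace ℝ (Fin N))
      = ‖gradient u x‖ ^ q


open scoped RealInnerProductSpace

/-- Necessary conditions of first and second order at a local maximum on the line. -/
theorem IsLocalMax.second_derivative_nonpos {h h' : ℝ → ℝ} {c : ℝ}
    (hh : ∀ᶠ t in 𝓝 (0 : ℝ), HasDerivAt h (h' t) t) (hh' : HasDerivAt h' c 0)
    (hmax : IsLocalMax h 0) : h' 0 = 0 ∧ c ≤ 0 := by
  have h0 : h' 0 = 0 := hmax.hasDerivAt_eq_zero hh.self_of_nhds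
  refine ⟨h0, ?_⟩
  by_contra! hc
  have hd : deriv h =ᶠ[𝓝 0] h' := hh.mono fun t ht => ht.deriv
  have hdd : deriv (deriv h) 0 = c := by rw [hd.deriv_eq, hh'.deriv]
  have hmin : IsLocalMin h 0 := isLocalMin_of_deriv_deriv_pos (by rw [hdd]; exact hc)
    (by rw [hd.self_of_nhds, h0]) hh.self_of_nhds.continuousAt
  have hconst : h =ᶠ[𝓝 0] fun _ => h 0 := by
    filter_upwards [hmax, hmin] with t h1 h2 using le_antisymm h1 h2
  have : deriv (deriv h) 0 = 0 := by
    rw [hconst.deriv.deriv_eq]; simp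
  linarith

/-- A quadratic inequality bounds its nonnegative solutions linearly. -/
theorem le_mul_of_quadratic_le {α K L R Y : ℝ} (hα : 0 < α) (hK : 0 ≤ K) (hL : 0 ≤ L)
    (hR : 0 < R) (hY : 0 < Y) (h : α * Y ^ 2 ≤ K * R * Y + L * R ^ 2) :
    Y ≤ ((K + L) / α + 1) * R := by
  have hQ : 0 ≤ (K + L) / α := by positivity
  by_contra! hlt
  have hRlt : R < Y := by nlinarith
  have h1 : α * Y ≤ (K + L) * R := by
    refine le_of_mul_le_mul_right ?_ hY
    nlinarith [mul_le_mul_of_nonneg_left hRlt.le (mul_nonneg hL hR.le)]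
  have h2 : Y ≤ (K + L) / α * R := by
    rw [div_mul_eq_mul_div, le_div_iff₀ hα]; linarith
  linarith

section Abstract

variable {E : Type*} [NormedAddCommGroup E] [InnerProductSpace ℝ E]

theorem hasDerivAt_line (x a : E) (t : ℝ) : HasDerivAt (fun t : ℝ => x + t • a) a t := by
  simpa using ((hasDerivAt_id t).smul_const a).const_add x

theorem tendsto_line (x a : E) : Tendsto (fun t : ℝ => x + t • a) (𝓝 0) (𝓝 x) := by
  have := (hasDerivAt_line x a 0).continuousAt.tendsto
  simpa using this

theorem HasFDerivAt.hasDerivAt_line {F : Type*} [NormedAddCommGroup F] [NormedSpace ℝ F]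
    {f : E → F} {f' : E →L[ℝ] F} {x a : E} {t : ℝ} (hf : HasFDerivAt f f' (x + t • a)) :
    HasDerivAt (fun t : ℝ => f (x + t • a)) (f' a) t :=
  hf.comp_hasDerivAt t (_root_.hasDerivAt_line x a t)

/-- First and second order conditions, in a fixed direction, at an interior maximum of
`m log |g|² + log (R² - |x - z|²)`. -/
theorem bernstein_test {g : E → E} {H : E → E →L[ℝ] E} {T : E →L[ℝ] E →L[ℝ] E} {x z : E}
    {m R : ℝ} (hg : ∀ᶠ y in 𝓝 x, HasFDerivAt g (H y) y) (hH : HasFDerivAt H T x)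
    (hv : 0 < ⟪g x, g x⟫) (hφ : 0 < R ^ 2 - ⟪x - z, x - z⟫)
    (hmax : IsLocalMax (fun y => m * Real.log ⟪g y, g y⟫ + Real.log (R ^ 2 - ⟪y - z, y - z⟫)) x)
    (a : E) :
    m * ⟪H x a, g x⟫ / ⟪g x, g x⟫ = ⟪x - z, a⟫ / (R ^ 2 - ⟪x - z, x - z⟫) ∧
    m * (2 * (⟪T a a, g x⟫ + ⟪H x a, H x a⟫) / ⟪g x, g x⟫
        - 4 * ⟪H x a, g x⟫ ^ 2 / ⟪g x, g x⟫ ^ 2)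
      - (2 * ⟪a, a⟫ / (R ^ 2 - ⟪x - z, x - z⟫)
        + 4 * ⟪x - z, a⟫ ^ 2 / (R ^ 2 - ⟪x - z, x - z⟫) ^ 2) ≤ 0 := by
  have hgx : HasFDerivAt g (H x) x := hg.self_of_nhds
  have e1 : ∀ᶠ y in 𝓝 x, 0 < ⟪g y, g y⟫ :=
    (hgx.continuousAt.inner hgx.continuousAt).eventually (lt_mem_nhds hv)
  have e2 : ∀ᶠ y in 𝓝 x, 0 < R ^ 2 - ⟪y - z, y - z⟫ := by
    have : ContinuousAt (fun y => R ^ 2 - ⟪y - z, y - z⟫) x := by fun_prop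
    exact this.eventually (lt_mem_nhds hφ)
  have hl := tendsto_line x a
  set h : ℝ → ℝ := fun t => m * Real.log ⟪g (x + t • a), g (x + t • a)⟫
      + Real.log (R ^ 2 - ⟪x + t • a - z, x + t • a - z⟫) with hdef
  set h' : ℝ → ℝ := fun t =>
    m * (2 * ⟪H (x + t • a) a, g (x + t • a)⟫ / ⟪g (x + t • a), g (x + t • a)⟫)
      + (-2 * ⟪x + t • a - z, a⟫) / (R ^ 2 - ⟪x + t • a - z, x + t • a - z⟫) with hdef'
  have hφd : ∀ t : ℝ, HasDerivAt (fun t : ℝ => R ^ 2 - ⟪x + t • a - z, x + t • a - z⟫)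
      (-2 * ⟪x + t • a - z, a⟫) t := by
    intro t
    have h1 := (hasDerivAt_line x a t).sub_const z
    refine ((h1.inner ℝ h1).const_sub (R ^ 2)).congr_deriv ?_
    rw [real_inner_comm _ a]; ring
  have hvd : ∀ t : ℝ, HasFDerivAt g (H (x + t • a)) (x + t • a) →
      HasDerivAt (fun t : ℝ => ⟪g (x + t • a), g (x + t • a)⟫)
        (2 * ⟪H (x + t • a) a, g (x + t • a)⟫) t := by
    intro t ht
    have h1 := ht.hasDerivAt_line
    refine (h1.inner ℝ h1).congr_deriv ?_
    rw [real_inner_comm]; ring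
  have hh : ∀ᶠ t in 𝓝 (0 : ℝ), HasDerivAt h (h' t) t := by
    filter_upwards [hl.eventually hg, hl.eventually e1, hl.eventually e2] with t h1 h2 h3
    exact (((hvd t h1).log h2.ne').const_mul m).add ((hφd t).log h3.ne')
  have hx0 : x + (0 : ℝ) • a = x := by simp
  have hHa : HasDerivAt (fun t : ℝ => H (x + t • a) a) (T a a) 0 := by
    have h1 : HasDerivAt (fun t : ℝ => H (x + t • a)) (T a) 0 :=
      HasFDerivAt.hasDerivAt_line (by rw [hx0]; exact hH)
    simpa using h1.clm_apply (hasDerivAt_const 0 a)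
  have hga : HasDerivAt (fun t : ℝ => g (x + t • a)) (H x a) 0 :=
      HasFDerivAt.hasDerivAt_line (by rw [hx0]; exact hgx)
  have hh' : HasDerivAt h' (m * (2 * (⟪T a a, g x⟫ + ⟪H x a, H x a⟫) / ⟪g x, g x⟫
        - 4 * ⟪H x a, g x⟫ ^ 2 / ⟪g x, g x⟫ ^ 2)
      - (2 * ⟪a, a⟫ / (R ^ 2 - ⟪x - z, x - z⟫)
        + 4 * ⟪x - z, a⟫ ^ 2 / (R ^ 2 - ⟪x - z, x - z⟫) ^ 2)) 0 := by
    have d1 := (((hHa.inner ℝ hga).const_mul 2).fun_div (hvd 0 (by rw [hx0]; exact hgx))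
      (by rw [hx0]; exact hv.ne')).const_mul m
    have d2 := (((((hasDerivAt_line x a 0).sub_const z).inner ℝ (hasDerivAt_const 0 a)).const_mul
      (-2)).fun_div (hφd 0) (by rw [hx0]; exact hφ.ne'))
    refine (d1.fun_add d2).congr_deriv ?_
    simp only [hx0, inner_zero_right]
    have := hv.ne'
    have := hφ.ne'
    field_simp
    ring
  have hm : IsLocalMax h 0 := by
    have : ∀ᶠ y in 𝓝 x, m * Real.log ⟪g y, g y⟫ + Real.log (R ^ 2 - ⟪y - z, y - z⟫) ≤ h 0 := by
      simp only [hdef, hx0]; exact hmax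
    exact hl.eventually this
  obtain ⟨c1, c2⟩ := IsLocalMax.second_derivative_nonpos hh hh' hm
  refine ⟨?_, c2⟩
  simp only [hdef', hx0] at c1
  have e : m * (2 * ⟪H x a, g x⟫ / ⟪g x, g x⟫)
      + (-2 * ⟪x - z, a⟫) / (R ^ 2 - ⟪x - z, x - z⟫)
    = 2 * (m * ⟪H x a, g x⟫ / ⟪g x, g x⟫ - ⟪x - z, a⟫ / (R ^ 2 - ⟪x - z, x - z⟫)) := by ring
  rw [e] at c1
  linarith

/-- A square root of the matrix `1 + (p - 2) g ⊗ g / |g|²`, seen through its columns. -/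
theorem exists_frame {ι : Type*} [Fintype ι] (e : OrthonormalBasis ι ℝ E) {p : ℝ} (hp : 1 < p)
    {g : E} (hg : 0 < ⟪g, g⟫) :
    ∃ a : ι → E, ∀ B : E →L[ℝ] E,
      ∑ i, ⟪B (a i), a i⟫ = ∑ i, ⟪B (e i), e i⟫ + (p - 2) * ⟪B g, g⟫ / ⟪g, g⟫ := by
  set κ : ℝ := (√(p - 1) - 1) / ⟪g, g⟫ with hκ
  have hs : √(p - 1) ^ 2 = p - 1 := Real.sq_sqrt (by linarith)
  have hκ' : 2 * κ + κ ^ 2 * ⟪g, g⟫ = (p - 2) / ⟪g, g⟫ := by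
    rw [hκ]; field_simp; linear_combination hs
  refine ⟨fun i => e i + (κ * ⟪e i, g⟫) • g, fun B => ?_⟩
  have s1 : ∑ i, ⟪e i, g⟫ * ⟪B (e i), g⟫ = ⟪B g, g⟫ := by
    conv_rhs => rw [← e.sum_repr' g]
    rw [map_sum, sum_inner]
    conv_rhs => enter [2, i]; rw [map_smul, real_inner_smul_left, e.sum_repr' g]
  have s2 : ∑ i, ⟪e i, g⟫ * ⟪B g, e i⟫ = ⟪B g, g⟫ := by
    rw [← e.sum_inner_mul_inner (B g) g]; exact Finset.sum_congr rfl fun i _ => mul_comm _ _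
  have s3 : ∑ i, ⟪e i, g⟫ * ⟪e i, g⟫ = ⟪g, g⟫ := by
    rw [← e.sum_inner_mul_inner g g]
    exact Finset.sum_congr rfl fun i _ => by rw [real_inner_comm (e i) g]
  have : ∀ i, ⟪B (e i + (κ * ⟪e i, g⟫) • g), e i + (κ * ⟪e i, g⟫) • g⟫
      = ⟪B (e i), e i⟫ + κ * (⟪e i, g⟫ * ⟪B (e i), g⟫) + κ * (⟪e i, g⟫ * ⟪B g, e i⟫)
        + κ ^ 2 * ⟪B g, g⟫ * (⟪e i, g⟫ * ⟪e i, g⟫) := by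
    intro i
    simp only [map_add, map_smul, inner_add_left, inner_add_right, real_inner_smul_left,
      real_inner_smul_right]
    ring
  simp only [this, Finset.sum_add_distrib, ← Finset.mul_sum, s1, s2, s3]
  linear_combination ⟪B g, g⟫ * hκ'

/-- The equation in nondivergence form, differentiated in the direction of the gradient. -/
theorem differentiated_equation {ι : Type*} [Fintype ι] (e : OrthonormalBasis ι ℝ E) {p s : ℝ}
    {g : E → E} {H : E → E →L[ℝ] E} {T : E →L[ℝ] E →L[ℝ] E} {x : E}
    (hgx : HasFDerivAt g (H x) x) (hH : HasFDerivAt H T x)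
    (hv : 0 < ⟪g x, g x⟫) (hsymm : ∀ a b, ⟪H x a, b⟫ = ⟪a, H x b⟫)
    (heq : ∀ᶠ y in 𝓝 x, ∑ i, ⟪H y (e i), e i⟫ + (p - 2) * ⟪H y (g y), g y⟫ / ⟪g y, g y⟫
      = ⟪g y, g y⟫ ^ s) :
    ∑ i, ⟪T (g x) (e i), e i⟫ + (p - 2) * ⟪T (g x) (g x), g x⟫ / ⟪g x, g x⟫
      = 2 * s * ⟪g x, g x⟫ ^ (s - 1) * ⟪H x (g x), g x⟫
        - 2 * (p - 2) * (⟪H x (g x), H x (g x)⟫ / ⟪g x, g x⟫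
          - ⟪H x (g x), g x⟫ ^ 2 / ⟪g x, g x⟫ ^ 2) := by
  set w := g x with hw
  have hx0 : x + (0 : ℝ) • w = x := by simp
  have hHw : HasDerivAt (fun t : ℝ => H (x + t • w)) (T w) 0 :=
    HasFDerivAt.hasDerivAt_line (by rw [hx0]; exact hH)
  have hgw : HasDerivAt (fun t : ℝ => g (x + t • w)) (H x w) 0 :=
    HasFDerivAt.hasDerivAt_line (by rw [hx0]; exact hgx)
  have hvw := hgw.inner ℝ hgw
  have hne : ⟪g (x + (0 : ℝ) • w), g (x + (0 : ℝ) • w)⟫ ≠ 0 := by rw [hx0]; exact hv.ne'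
  have dr := hvw.rpow_const (p := s) (Or.inl hne)
  have d1 : ∀ i ∈ Finset.univ, HasDerivAt (fun t : ℝ => ⟪H (x + t • w) (e i), e i⟫)
      ⟪T w (e i), e i⟫ 0 := fun i _ => by
    simpa using (hHw.clm_apply (hasDerivAt_const 0 (e i))).inner ℝ (hasDerivAt_const 0 (e i))
  have d2 := ((((hHw.clm_apply hgw).inner ℝ hgw).const_mul (p - 2)).fun_div hvw hne)
  have dl := (HasDerivAt.fun_sum d1).fun_add d2
  have key := dl.unique (dr.congr_of_eventuallyEq ((tendsto_line x w).eventually heq))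
  simp only [hx0, ← hw, inner_add_left] at key
  rw [hsymm (H x w) w, real_inner_comm (H x w) w] at key
  have := hv.ne'
  calc _ = ∑ i, ⟪T w (e i), e i⟫ + ((p - 2) * (⟪H x w, H x w⟫ +
            (⟪T w w, w⟫ + ⟪H x w, H x w⟫)) * ⟪w, w⟫ -
          (p - 2) * ⟪H x w, w⟫ * (⟪H x w, w⟫ + ⟪H x w, w⟫)) / ⟪w, w⟫ ^ 2
        - 2 * (p - 2) * (⟪H x w, H x w⟫ / ⟪w, w⟫ - ⟪H x w, w⟫ ^ 2 / ⟪w, w⟫ ^ 2) := by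
        field_simp; ring
    _ = _ := by rw [key]; ring

set_option maxHeartbeats 1000000 in
/-- The Bernstein estimate at an interior maximum of `m log |g|² + log (R² - |x - z|²)`. -/
theorem bernstein_bound {ι : Type*} [Fintype ι] (e : OrthonormalBasis ι ℝ E) {p m R : ℝ}
    (hp : 1 < p) (hm : 0 < m) (hR : 0 < R) (hM : 0 < Fintype.card ι + (p - 2))
    {g : E → E} {H : E → E →L[ℝ] E} {T : E →L[ℝ] E →L[ℝ] E} {x z : E}
    (hg : ∀ᶠ y in 𝓝 x, HasFDerivAt g (H y) y) (hH : HasFDerivAt H T x)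
    (hsymm : ∀ᶠ y in 𝓝 x, ∀ a b, ⟪H y a, b⟫ = ⟪a, H y b⟫)
    (hv : 0 < ⟪g x, g x⟫) (hφ : 0 < R ^ 2 - ⟪x - z, x - z⟫)
    (heq : ∀ᶠ y in 𝓝 x, ∑ i, ⟪H y (e i), e i⟫ + (p - 2) * ⟪H y (g y), g y⟫ / ⟪g y, g y⟫
      = ⟪g y, g y⟫ ^ (m + 1 / 2))
    (hmax : IsLocalMax
      (fun y => m * Real.log ⟪g y, g y⟫ + Real.log (R ^ 2 - ⟪y - z, y - z⟫)) x) :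
    ⟪g x, g x⟫ ^ m * (R ^ 2 - ⟪x - z, x - z⟫)
      ≤ ((4 * (m + 1 / 2) + 4 * |p - 2| / m + (Fintype.card ι + (p - 2)) * (4 / m + 6))
        / (2 * m / (Fintype.card ι + (p - 2))) + 1) * R := by
  have htest := bernstein_test hg hH hv hφ hmax
  have hdiff := differentiated_equation e hg.self_of_nhds hH hv hsymm.self_of_nhds heq
  have heqx := heq.self_of_nhds
  have hTsymm := second_derivative_symmetric_of_eventually hg hH
  have hTadj : ∀ a b c, ⟪T a b, c⟫ = ⟪b, T a c⟫ := by
    intro a b c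
    have hx0 : x + (0 : ℝ) • a = x := by simp
    have hHa : HasDerivAt (fun t : ℝ => H (x + t • a)) (T a) 0 :=
      HasFDerivAt.hasDerivAt_line (by rw [hx0]; exact hH)
    have d1 := (hHa.clm_apply (hasDerivAt_const 0 b)).inner ℝ (hasDerivAt_const 0 c)
    have d2 := (hasDerivAt_const (0 : ℝ) b).inner ℝ (hHa.clm_apply (hasDerivAt_const 0 c))
    have ev := ((tendsto_line x a).eventually hsymm).mono fun t ht => ht b c
    simpa using d1.unique (d2.congr_of_eventuallyEq ev)
  obtain ⟨a, ha⟩ := exists_frame e hp hv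
  have hsx := hsymm.self_of_nhds
  set M : ℝ := Fintype.card ι + (p - 2) with hMdef
  have hSa : ∑ i, ⟪a i, a i⟫ = M := by
    have := ha (ContinuousLinearMap.id ℝ E)
    simp only [ContinuousLinearMap.id_apply] at this
    rw [this, mul_div_assoc, div_self hv.ne']
    simp [hMdef]
  rw [← ha (T (g x))] at hdiff
  rw [← ha (H x)] at heqx
  set v := ⟪g x, g x⟫ with hvdef
  set φ := R ^ 2 - ⟪x - z, x - z⟫ with hφdef
  set y := x - z with hy
  have hyy : 0 ≤ ⟪y, y⟫ := real_inner_self_nonneg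
  have hφR : φ ≤ R ^ 2 := by linarith
  have hyR : ⟪y, y⟫ ≤ R ^ 2 := by linarith
  have hHg : H x (g x) = (v / (m * φ)) • y := by
    refine ext_inner_right ℝ fun b => ?_
    have := (htest b).1
    rw [real_inner_smul_left, hsx, real_inner_comm]
    field_simp at this ⊢
    linear_combination this
  have hyg : |⟪y, g x⟫| ≤ R * √v := by
    refine (abs_real_inner_le_norm _ _).trans ?_
    have h1 : ‖y‖ ≤ R := by
      rw [real_inner_self_eq_norm_sq] at hyR
      exact le_of_sq_le_sq hyR hR.le
    have h2 : ‖g x‖ = √v := by rw [hvdef, real_inner_self_eq_norm_sq, Real.sqrt_sq (norm_nonneg _)]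
    rw [h2]; gcongr
  set W := v ^ m with hW
  have hW0 : 0 < W := Real.rpow_pos_of_pos hv _
  have hvs : v ^ (m + 1 / 2) = W * √v := by
    rw [Real.rpow_add hv, Real.sqrt_eq_rpow]
  have hvs1 : v ^ (m + 1 / 2 - 1) = W * √v / v := by
    rw [Real.rpow_sub hv, hvs, Real.rpow_one]
  have hsq : √v * √v = v := Real.mul_self_sqrt hv.le
  have hSH : W ^ 2 * v ≤ (∑ i, ⟪H x (a i), H x (a i)⟫) * M := by
    have h1 : (∑ i, ⟪H x (a i), a i⟫) ^ 2 = W ^ 2 * v := by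
      rw [heqx, hvs]; linear_combination W ^ 2 * hsq
    rw [← h1, ← hSa]
    calc (∑ i, ⟪H x (a i), a i⟫) ^ 2 ≤ (∑ i, ‖H x (a i)‖ * ‖a i‖) ^ 2 := by
          refine sq_le_sq' ?_ (Finset.sum_le_sum fun i _ => real_inner_le_norm _ _)
          rw [← Finset.sum_neg_distrib]
          exact Finset.sum_le_sum fun i _ => neg_le_of_abs_le (abs_real_inner_le_norm _ _)
      _ ≤ _ := by
          simp only [real_inner_self_eq_norm_sq]
          exact Finset.sum_mul_sq_le_sq_mul_sq _ _ _
  have hY2 : ∑ i, ⟪y, a i⟫ ^ 2 ≤ R ^ 2 * M := by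
    rw [← hSa, Finset.mul_sum]
    refine Finset.sum_le_sum fun i _ => ?_
    calc ⟪y, a i⟫ ^ 2 = ⟪y, a i⟫ * ⟪y, a i⟫ := sq _
      _ ≤ ⟪y, y⟫ * ⟪a i, a i⟫ := real_inner_mul_inner_self_le _ _
      _ ≤ _ := mul_le_mul_of_nonneg_right hyR real_inner_self_nonneg
  set SH := ∑ i, ⟪H x (a i), H x (a i)⟫ with hSHdef
  set ST := ∑ i, ⟪T (g x) (a i), a i⟫ with hSTdef
  set Y2 := ∑ i, ⟪y, a i⟫ ^ 2 with hY2def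
  have hsum : 2 * m * (ST + SH) / v ≤ (4 / m + 4) * Y2 / φ ^ 2 + 2 * M / φ := by
    have h1 : ∀ i, 2 * m / v * (⟪T (g x) (a i), a i⟫ + ⟪H x (a i), H x (a i)⟫)
        ≤ (4 / m + 4) / φ ^ 2 * ⟪y, a i⟫ ^ 2 + 2 / φ * ⟪a i, a i⟫ := by
      intro i
      obtain ⟨c1, c2⟩ := htest (a i)
      have h2 : ⟪T (a i) (a i), g x⟫ = ⟪T (g x) (a i), a i⟫ := by
        rw [hTadj, hTsymm, real_inner_comm]
      rw [h2] at c2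
      have h3 : 4 * ⟪H x (a i), g x⟫ ^ 2 / v ^ 2 = 4 / m ^ 2 * (⟪y, a i⟫ / φ) ^ 2 := by
        rw [← c1]; field_simp
      rw [h3] at c2
      have h4 : m * (4 / m ^ 2 * (⟪y, a i⟫ / φ) ^ 2) = 4 / m / φ ^ 2 * ⟪y, a i⟫ ^ 2 := by
        field_simp
      rw [mul_sub, h4] at c2
      linear_combination c2
    have h5 := Finset.sum_le_sum fun i (_ : i ∈ Finset.univ) => h1 i
    rw [Finset.sum_add_distrib, ← Finset.mul_sum, ← Finset.mul_sum, ← Finset.mul_sum,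
      Finset.sum_add_distrib, hSa] at h5
    linear_combination h5
  have hin : |⟪H x (g x), g x⟫| ≤ v / (m * φ) * (R * √v) := by
    rw [hHg, real_inner_smul_left, abs_mul, abs_of_pos (by positivity)]
    gcongr
  have hD0 : 0 ≤ ⟪H x (g x), H x (g x)⟫ / v - ⟪H x (g x), g x⟫ ^ 2 / v ^ 2 := by
    have := real_inner_mul_inner_self_le (H x (g x)) (g x)
    rw [sub_nonneg, div_le_div_iff₀ (by positivity) hv]
    rw [← hvdef] at this
    nlinarith
  have hD1 : ⟪H x (g x), H x (g x)⟫ / v - ⟪H x (g x), g x⟫ ^ 2 / v ^ 2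
      ≤ v * R ^ 2 / (m * φ) ^ 2 := by
    refine (sub_le_self _ (by positivity)).trans ?_
    rw [hHg, real_inner_smul_left, real_inner_smul_right]
    calc v / (m * φ) * (v / (m * φ) * ⟪y, y⟫) / v = v * ⟪y, y⟫ / (m * φ) ^ 2 := by field_simp
      _ ≤ _ := by gcongr
  set D := ⟪H x (g x), H x (g x)⟫ / v - ⟪H x (g x), g x⟫ ^ 2 / v ^ 2 with hD
  rw [hvs1] at hdiff
  have hST : -(2 * (m + 1 / 2) * (W * v * R / (m * φ)) + 2 * |p - 2| * (v * R ^ 2 / (m * φ) ^ 2))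
      ≤ ST := by
    rw [hdiff]
    have h1 : -(W * v * R / (m * φ)) ≤ W * √v / v * ⟪H x (g x), g x⟫ := by
      have h2 : W * √v / v * (v / (m * φ) * (R * √v)) = W * v * R / (m * φ) := by
        field_simp; rw [Real.sq_sqrt hv.le]
      rw [← h2, ← mul_neg]
      exact mul_le_mul_of_nonneg_left (neg_le_of_abs_le hin) (by positivity)
    have h3 : (p - 2) * D ≤ |p - 2| * (v * R ^ 2 / (m * φ) ^ 2) :=
      mul_le_mul (le_abs_self _) hD1 hD0 (abs_nonneg _)
    have h4 := mul_le_mul_of_nonneg_left h1 (show 0 ≤ 2 * (m + 1 / 2) by linarith)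
    linarith
  have hfin : 2 * m / M * (W * φ) ^ 2 ≤ (4 * (m + 1 / 2)) * R * (W * φ)
      + (4 * |p - 2| / m + M * (4 / m + 6)) * R ^ 2 := by
    have h1 : 2 * m / M * (W * φ) ^ 2 ≤ 2 * m * SH / v * φ ^ 2 := by
      rw [div_mul_eq_mul_div, div_mul_eq_mul_div, div_le_div_iff₀ hM hv]
      have := mul_le_mul_of_nonneg_left hSH (show 0 ≤ 2 * m * φ ^ 2 by positivity)
      linarith
    have h2 : 2 * m * (ST + SH) / v * φ ^ 2 ≤ (4 / m + 4) * Y2 + 2 * M * φ := by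
      have := mul_le_mul_of_nonneg_right hsum (sq_nonneg φ)
      refine this.trans_eq ?_
      field_simp
    have h3 : -(4 * (m + 1 / 2) * R * (W * φ) + 4 * |p - 2| / m * R ^ 2)
        ≤ 2 * m * ST / v * φ ^ 2 := by
      have := mul_le_mul_of_nonneg_left hST (show 0 ≤ 2 * m / v * φ ^ 2 by positivity)
      refine le_trans (le_of_eq ?_) (this.trans_eq (by ring))
      field_simp
      ring
    have h4 : (4 / m + 4) * Y2 ≤ (4 / m + 4) * (R ^ 2 * M) := by gcongr
    have h5 : 2 * M * φ ≤ 2 * M * R ^ 2 := by gcongr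
    have h6 : 2 * m * (ST + SH) / v * φ ^ 2 = 2 * m * ST / v * φ ^ 2 + 2 * m * SH / v * φ ^ 2 := by
      ring
    linarith
  have hp2 := abs_nonneg (p - 2)
  rw [add_assoc (4 * (m + 1 / 2))]
  exact le_mul_of_quadratic_le (by positivity) (by positivity) (by positivity) hR
    (by positivity) hfin

end Abstract

section Gradient

variable {E : Type*} [NormedAddCommGroup E] [InnerProductSpace ℝ E] [CompleteSpace E]

/-- The inverse of the Riesz isomorphism of a real Hilbert space, as a linear map. -/
noncomputable def rieszSymm (E : Type*) [NormedAddCommGroup E] [InnerProductSpace ℝ E]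
    [CompleteSpace E] : StrongDual ℝ E →L[ℝ] E :=
  LinearMap.mkContinuous
    { toFun := (InnerProductSpace.toDual ℝ E).symm
      map_add' := fun a b => map_add _ a b
      map_smul' := fun a b => by simp } 1 (fun l => by simp)

theorem inner_rieszSymm (l : StrongDual ℝ E) (x : E) : ⟪rieszSymm E l, x⟫ = l x :=
  InnerProductSpace.toDual_symm_apply

theorem gradient_eq_rieszSymm (u : E → ℝ) : gradient u = fun x => rieszSymm E (fderiv ℝ u x) :=
  rfl

theorem ContDiffOn.continuousOn_gradient {u : E → ℝ} {G : Set E} (hG : IsOpen G)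
    (hu : ContDiffOn ℝ 1 u G) : ContinuousOn (gradient u) G := by
  rw [gradient_eq_rieszSymm]
  exact (rieszSymm E).continuous.comp_continuousOn (hu.continuousOn_fderiv_of_isOpen hG le_rfl)

theorem ContDiffAt.gradient_two {u : E → ℝ} {x : E} (hu : ContDiffAt ℝ 3 u x) :
    ContDiffAt ℝ 2 (gradient u) x := by
  rw [gradient_eq_rieszSymm]
  exact (rieszSymm E).contDiff.contDiffAt.comp x (hu.fderiv_right (by norm_num))

theorem ContDiffAt.inner_fderiv_gradient_comm {u : E → ℝ} {x : E} (hu : ContDiffAt ℝ 3 u x)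
    (a b : E) : ⟪fderiv ℝ (gradient u) x a, b⟫ = ⟪a, fderiv ℝ (gradient u) x b⟫ := by
  have hd : DifferentiableAt ℝ (fderiv ℝ u) x :=
    (hu.fderiv_right (m := 2) (by norm_num)).differentiableAt (by norm_num)
  have h : fderiv ℝ (gradient u) x = (rieszSymm E).comp (fderiv ℝ (fderiv ℝ u) x) := by
    rw [gradient_eq_rieszSymm]
    exact ((rieszSymm E).hasFDerivAt.comp x hd.hasFDerivAt).fderiv
  have hs : IsSymmSndFDerivAt ℝ u x := hu.isSymmSndFDerivAt
    (by rw [minSmoothness_of_isRCLikeNormedField]; norm_num)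
  rw [h, real_inner_comm _ a]
  simp only [ContinuousLinearMap.comp_apply, inner_rieszSymm]
  exact hs a b

end Gradient

section Equation

variable {N : ℕ}

theorem norm_rpow_eq_inner_rpow {E : Type*} [NormedAddCommGroup E] [InnerProductSpace ℝ E] (x : E)
    (r : ℝ) : ‖x‖ ^ r = ⟪x, x⟫ ^ (r / 2) := by
  rw [real_inner_self_eq_norm_sq, ← Real.rpow_natCast_mul (norm_nonneg x)]
  congr 1
  push_cast
  ring

theorem hasFDerivAt_pGradField {p : ℝ} {u : EuclideanSpace ℝ (Fin N) → ℝ}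
    {x : EuclideanSpace ℝ (Fin N)} (hx : gradient u x ≠ 0)
    (hd : DifferentiableAt ℝ (gradient u) x) :
    HasFDerivAt (pGradField p u)
      (⟪gradient u x, gradient u x⟫ ^ ((p - 2) / 2) • fderiv ℝ (gradient u) x
        + (((p - 2) / 2 * ⟪gradient u x, gradient u x⟫ ^ ((p - 2) / 2 - 1)) •
            (fderivInnerCLM ℝ (gradient u x, gradient u x) ∘SL
              (fderiv ℝ (gradient u) x).prod (fderiv ℝ (gradient u) x))).smulRight
          (gradient u x)) x := by
  have hv : ⟪gradient u x, gradient u x⟫ ≠ 0 := inner_self_ne_zero.mpr hx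
  have hF : pGradField p u
      = (fun y => ⟪gradient u y, gradient u y⟫ ^ ((p - 2) / 2)) • gradient u := by
    ext1 y
    simp only [pGradField, norm_rpow_eq_inner_rpow, Pi.smul_apply']
  rw [hF]
  exact ((hd.hasFDerivAt.inner ℝ hd.hasFDerivAt).rpow_const (Or.inl hv)).smul hd.hasFDerivAt

theorem trace_fderiv_pGradField {ι : Type*} [Fintype ι]
    (e : OrthonormalBasis ι ℝ (EuclideanSpace ℝ (Fin N))) {p : ℝ}
    {u : EuclideanSpace ℝ (Fin N) → ℝ} {x : EuclideanSpace ℝ (Fin N)} (hx : gradient u x ≠ 0)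
    (hd : DifferentiableAt ℝ (gradient u) x) :
    LinearMap.trace ℝ (EuclideanSpace ℝ (Fin N))
      (fderiv ℝ (pGradField p u) x : EuclideanSpace ℝ (Fin N) →ₗ[ℝ] EuclideanSpace ℝ (Fin N))
      = ⟪gradient u x, gradient u x⟫ ^ ((p - 2) / 2) *
        (∑ i, ⟪fderiv ℝ (gradient u) x (e i), e i⟫
          + (p - 2) * ⟪fderiv ℝ (gradient u) x (gradient u x), gradient u x⟫ /
            ⟪gradient u x, gradient u x⟫) := by
  have hv : 0 < ⟪gradient u x, gradient u x⟫ := real_inner_self_pos.mpr hx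
  rw [LinearMap.trace_eq_sum_inner _ e, (hasFDerivAt_pGradField hx hd).fderiv]
  set g := gradient u x
  set H := fderiv ℝ (gradient u) x
  have hs : ∑ i, ⟪e i, g⟫ * ⟪H (e i), g⟫ = ⟪H g, g⟫ := by
    conv_rhs => rw [← e.sum_repr' g]
    rw [map_sum, sum_inner]
    conv_rhs => enter [2, i]; rw [map_smul, real_inner_smul_left, e.sum_repr' g]
  have hterm : ∀ i, ⟪e i, ((⟪g, g⟫ ^ ((p - 2) / 2) • H
        + (((p - 2) / 2 * ⟪g, g⟫ ^ ((p - 2) / 2 - 1)) •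
            (fderivInnerCLM ℝ (g, g) ∘SL H.prod H)).smulRight g :
        EuclideanSpace ℝ (Fin N) →L[ℝ] EuclideanSpace ℝ (Fin N)) :
        EuclideanSpace ℝ (Fin N) →ₗ[ℝ] EuclideanSpace ℝ (Fin N)) (e i)⟫
      = ⟪g, g⟫ ^ ((p - 2) / 2) * ⟪H (e i), e i⟫
        + (p - 2) * ⟪g, g⟫ ^ ((p - 2) / 2 - 1) * (⟪e i, g⟫ * ⟪H (e i), g⟫) := by
    intro i
    simp [inner_add_right, real_inner_smul_right, fderivInnerCLM_apply]
    rw [real_inner_comm (H (e i)) g, real_inner_comm (H (e i)) (e i)]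
    ring
  rw [Finset.sum_congr rfl fun i _ => hterm i, Finset.sum_add_distrib, ← Finset.mul_sum,
    ← Finset.mul_sum, hs, Real.rpow_sub_one hv.ne']
  field_simp

theorem IsStrongSolution.nondivergence_form {ι : Type*} [Fintype ι]
    (e : OrthonormalBasis ι ℝ (EuclideanSpace ℝ (Fin N))) {p q : ℝ}
    {G : Set (EuclideanSpace ℝ (Fin N))} {u : EuclideanSpace ℝ (Fin N) → ℝ}
    (hu : IsStrongSolution p q G u) {x : EuclideanSpace ℝ (Fin N)} (hxG : x ∈ G)
    (hx : gradient u x ≠ 0) (hd : DifferentiableAt ℝ (gradient u) x) :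
    ∑ i, ⟪fderiv ℝ (gradient u) x (e i), e i⟫
          + (p - 2) * ⟪fderiv ℝ (gradient u) x (gradient u x), gradient u x⟫ /
            ⟪gradient u x, gradient u x⟫
      = ⟪gradient u x, gradient u x⟫ ^ ((q + 1 - p) / 2 + 1 / 2) := by
  have hv : 0 < ⟪gradient u x, gradient u x⟫ := real_inner_self_pos.mpr hx
  have h := (hu.2.2 x hxG).2
  rw [trace_fderiv_pGradField e hx hd, norm_rpow_eq_inner_rpow] at h
  have he : (q + 1 - p) / 2 + 1 / 2 = q / 2 - (p - 2) / 2 := by ring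
  rw [he, Real.rpow_sub hv, ← h]
  field_simp

/-- The gradient bound at the centre of a closed ball contained in the domain. -/
theorem IsStrongSolution.gradient_bound_closedBall {p q R : ℝ} (hp : 1 < p) (hq : p - 1 < q)
    (hM : 0 < (N : ℝ) + (p - 2)) {G : Set (EuclideanSpace ℝ (Fin N))} (hG : IsOpen G)
    {u : EuclideanSpace ℝ (Fin N) → ℝ} (hu : IsStrongSolution p q G u)
    {z : EuclideanSpace ℝ (Fin N)} (hR : 0 < R) (hball : closedBall z R ⊆ G)
    {m : ℝ} (hm : m = (q + 1 - p) / 2) :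
    ‖gradient u z‖ ^ (q + 1 - p) * R
      ≤ (4 * (m + 1 / 2) + 4 * |p - 2| / m + (N + (p - 2)) * (4 / m + 6))
        / (2 * m / (N + (p - 2))) + 1 := by
  have hm0 : 0 < m := by rw [hm]; linarith
  set C := (4 * (m + 1 / 2) + 4 * |p - 2| / m + (N + (p - 2)) * (4 / m + 6))
        / (2 * m / (N + (p - 2))) + 1 with hC
  rw [norm_rpow_eq_inner_rpow, ← hm]
  by_cases hz : gradient u z = 0
  · rw [hz, inner_zero_left, Real.zero_rpow hm0.ne', zero_mul]
    have := abs_nonneg (p - 2)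
    positivity
  set g := gradient u with hgdef
  have hgc : ContinuousOn g G := hu.1.continuousOn_gradient hG
  have hzv : 0 < ⟪g z, g z⟫ := real_inner_self_pos.mpr hz
  set Ψ : EuclideanSpace ℝ (Fin N) → ℝ := fun y => ⟪g y, g y⟫ ^ m * (R ^ 2 - ⟪y - z, y - z⟫)
    with hΨ
  have hΨc : ContinuousOn Ψ (closedBall z R) := by
    have h1 : ContinuousOn (fun y => ⟪g y, g y⟫ ^ m) (closedBall z R) :=
      ((hgc.mono hball).inner (hgc.mono hball)).rpow_const fun _ _ => Or.inr hm0.le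
    refine h1.mul ?_
    fun_prop
  obtain ⟨x, hxB, hxmax⟩ := (isCompact_closedBall z R).exists_isMaxOn
    ⟨z, mem_closedBall_self hR.le⟩ hΨc
  have hzx : Ψ z ≤ Ψ x := hxmax (mem_closedBall_self hR.le)
  have hΨz : Ψ z = ⟪g z, g z⟫ ^ m * R ^ 2 := by simp [hΨ]
  have hΨx : 0 < Ψ x := lt_of_lt_of_le (by rw [hΨz]; positivity) hzx
  have hvm : 0 ≤ ⟪g x, g x⟫ ^ m := Real.rpow_nonneg real_inner_self_nonneg _
  have hφ : 0 < R ^ 2 - ⟪x - z, x - z⟫ := pos_of_mul_pos_right hΨx hvm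
  have hgx : g x ≠ 0 := by
    intro h
    simp [hΨ, h, Real.zero_rpow hm0.ne'] at hΨx
  have hv : 0 < ⟪g x, g x⟫ := real_inner_self_pos.mpr hgx
  have hxG : x ∈ G := hball hxB
  have hU : IsOpen {y | y ∈ G ∧ g y ≠ 0} :=
    hgc.isOpen_inter_preimage hG isOpen_compl_singleton
  have hUx : ∀ᶠ y in 𝓝 x, y ∈ {y | y ∈ G ∧ g y ≠ 0} := hU.mem_nhds ⟨hxG, hgx⟩
  have hu3 : ∀ᶠ y in 𝓝 x, ContDiffAt ℝ 3 u y :=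
    hUx.mono fun y hy => hu.2.1.contDiffAt (hU.mem_nhds hy)
  have hgd : ∀ᶠ y in 𝓝 x, DifferentiableAt ℝ g y :=
    hu3.mono fun y hy => hy.gradient_two.differentiableAt (by norm_num)
  have hH : DifferentiableAt ℝ (fderiv ℝ g) x :=
    (hu3.self_of_nhds.gradient_two.fderiv_right (m := 1) (by norm_num)).differentiableAt
      (by norm_num)
  set e := EuclideanSpace.basisFun (Fin N) ℝ
  have heq : ∀ᶠ y in 𝓝 x, ∑ i, ⟪fderiv ℝ g y (e i), e i⟫
      + (p - 2) * ⟪fderiv ℝ g y (g y), g y⟫ / ⟪g y, g y⟫ = ⟪g y, g y⟫ ^ (m + 1 / 2) := by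
    filter_upwards [hUx, hgd] with y hy hyd
    rw [hm]
    exact hu.nondivergence_form e hy.1 hy.2 hyd
  have hmax : IsLocalMax
      (fun y => m * Real.log ⟪g y, g y⟫ + Real.log (R ^ 2 - ⟪y - z, y - z⟫)) x := by
    have e2 : ∀ᶠ y in 𝓝 x, 0 < R ^ 2 - ⟪y - z, y - z⟫ := by
      have : ContinuousAt (fun y => R ^ 2 - ⟪y - z, y - z⟫) x := by fun_prop
      exact this.eventually (lt_mem_nhds hφ)
    have hlog : ∀ y, g y ≠ 0 → 0 < R ^ 2 - ⟪y - z, y - z⟫ →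
        m * Real.log ⟪g y, g y⟫ + Real.log (R ^ 2 - ⟪y - z, y - z⟫) = Real.log (Ψ y) := by
      intro y hy hyφ
      have hvy : 0 < ⟪g y, g y⟫ := real_inner_self_pos.mpr hy
      rw [hΨ, Real.log_mul (Real.rpow_pos_of_pos hvy _).ne' hyφ.ne', Real.log_rpow hvy]
    filter_upwards [hUx, e2] with y hy hyφ
    rw [hlog y hy.2 hyφ, hlog x hgx hφ]
    have hvy : 0 < ⟪g y, g y⟫ := real_inner_self_pos.mpr hy.2
    refine Real.log_le_log (mul_pos (Real.rpow_pos_of_pos hvy _) hyφ) (hxmax ?_)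
    rw [mem_closedBall, dist_eq_norm]
    rw [real_inner_self_eq_norm_sq] at hyφ
    exact le_of_sq_le_sq (by linarith) hR.le
  have hfin := bernstein_bound e hp hm0 hR (by simpa using hM)
    (hgd.mono fun y hy => hy.hasFDerivAt) hH.hasFDerivAt
    (hu3.mono fun y hy => hy.inner_fderiv_gradient_comm) hv hφ heq hmax
  rw [Fintype.card_fin, ← hC] at hfin
  have h1 : (⟪g z, g z⟫ ^ m * R) * R ≤ C * R := by
    refine le_trans (le_of_eq ?_) (hzx.trans hfin)
    rw [hΨz]; ring
  exact le_of_mul_le_mul_right h1 hR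

end Equation

/-- Universal gradient estimate for solutions of (E). -/
theorem gradient_estimate (N : ℕ) (hN : 2 ≤ N) (p q : ℝ) (hp : 1 < p) (hq : p - 1 < q) :
    ∃ c : ℝ, 0 < c ∧
      ∀ Ω : Set (EuclideanSpace ℝ (Fin N)), IsOpen Ω → Ω.Nonempty → Ω ≠ univ →
        ∀ u : EuclideanSpace ℝ (Fin N) → ℝ, IsStrongSolution p q Ω u →
          ∀ x ∈ Ω, ‖gradient u x‖ ≤ c * Metric.infDist x Ωᶜ ^ (-(1 / (q + 1 - p))) := by
  have hM : 0 < (N : ℝ) + (p - 2) := by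
    have : (2 : ℝ) ≤ N := by exact_mod_cast hN
    linarith
  have hk : 0 < q + 1 - p := by linarith
  obtain ⟨m, hm⟩ : ∃ m, m = (q + 1 - p) / 2 := ⟨_, rfl⟩
  have hm0 : 0 < m := by rw [hm]; linarith
  set C := (4 * (m + 1 / 2) + 4 * |p - 2| / m + (N + (p - 2)) * (4 / m + 6))
        / (2 * m / (N + (p - 2))) + 1 with hC
  have hC0 : 0 < C := by
    have := abs_nonneg (p - 2)
    positivity
  refine ⟨(2 * C) ^ (1 / (q + 1 - p)), by positivity, ?_⟩
  intro Ω hΩ _ hne u hu x hx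
  have hd : 0 < infDist x Ωᶜ :=
    (hΩ.isClosed_compl.notMem_iff_infDist_pos (nonempty_compl.mpr hne)).mp (by simpa using hx)
  set d := infDist x Ωᶜ with hddef
  have hball : closedBall x (d / 2) ⊆ Ω := by
    intro y hy
    by_contra hyΩ
    have h1 : d ≤ dist x y := infDist_le_dist_of_mem hyΩ
    rw [mem_closedBall, dist_comm] at hy
    linarith
  have hb := hu.gradient_bound_closedBall hp hq hM hΩ (half_pos hd) hball hm
  rw [← hC] at hb
  have hb' : ‖gradient u x‖ ^ (q + 1 - p) ≤ 2 * C / d := by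
    rw [le_div_iff₀ hd]; linarith
  calc ‖gradient u x‖ = (‖gradient u x‖ ^ (q + 1 - p)) ^ (1 / (q + 1 - p)) := by
        rw [← Real.rpow_mul (norm_nonneg _), mul_one_div_cancel hk.ne', Real.rpow_one]
    _ ≤ (2 * C / d) ^ (1 / (q + 1 - p)) := by gcongr
    _ = _ := by
        rw [Real.div_rpow (by positivity) hd.le, Real.rpow_neg hd.le, div_eq_mul_inv]
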